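/- Let V be a nontrivial finite-dimensional complex inner product space, H an infinite-dimensional complex Hilbert space, a, b, c ∈ ℂ with b ≠ 0, and Γ : ℕ → B(V, H) a family of bounded linear operators from V to H (with the convention Γ_{−1} = 0) such that: (1) the linear span of { Γ_n v : n ∈ ℕ, v ∈ V } is dense in H; (2) for all m, n ∈ ℕ, conj(c)·(m−1)·Γ_{m−1}*Γ_n + c·(n−1)·Γ_m*Γ_{n−1} + (a·n + conj(a)·m)·Γ_m*Γ_n + b·(n+1)·Γ_m*Γ_{n+1} + conj(b)·(m+1)·Γ_{m+1}*Γ_n = 0, where Γ_m* denotes the adjoint. Then the family (Γ_n)_{n∈ℕ} is linearly independent in B(V,H); in particular Γ_n ≠ 0 for every n. -/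

import Mathlib

open Complex ContinuousLinearMap

/-! `𝔎(z) = ∑ Γ_n zⁿ` and the coefficients `Λ_n` of `w 𝔎'` satisfy `Γ_m* Λ_n = -Λ_m* Γ_n`. As the
vectors `Γ_m v` are total, this makes `Γ_n v ↦ Λ_n v` a well-defined linear operator `X` on their
span. Composition with `X` acts on the sequence `Γ` as a Hessenberg matrix whose subdiagonal entries
`b (n + 1)` do not vanish. So once some `Γ_N` lies in the span of its predecessors, that span is
`X`-invariant and swallows every later `Γ_n`; all the `Γ_n v` then lie in a finite-dimensional
space, which is closed and therefore cannot be dense in `H`. -/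

section Algebra

open Submodule

theorem linearIndependent_of_notMem_span_image_Iio {ι K M : Type*} [LinearOrder ι]
    [DivisionRing K] [AddCommGroup M] [Module K M] {e : ι → M}
    (h : ∀ i, e i ∉ span K (e '' Set.Iio i)) : LinearIndependent K e := by
  classical
  rw [linearIndependent_iff_finset_linearIndependent]
  intro s
  change LinearIndepOn K e s
  induction s using Finset.induction_on_max with
  | empty => simp
  | insert i s hlt ih =>
    rw [Finset.coe_insert]
    exact ih.insert fun hi => h i (span_mono (Set.image_mono hlt) hi)

theorem exists_comp_eq_of_ker_le_ker {K M N P : Type*} [DivisionRing K]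
    [AddCommGroup M] [Module K M] [AddCommGroup N] [Module K N] [AddCommGroup P] [Module K P]
    {f : M →ₗ[K] N} {g : M →ₗ[K] P} (h : LinearMap.ker f ≤ LinearMap.ker g) :
    ∃ X : N →ₗ[K] P, X ∘ₗ f = g := by
  obtain ⟨s, hs⟩ := ((LinearMap.ker f).liftQ f le_rfl).exists_leftInverse_of_injective
    (ker_liftQ_eq_bot _ _ _ le_rfl)
  refine ⟨(LinearMap.ker f).liftQ g h ∘ₗ s, LinearMap.ext fun x => ?_⟩
  have hsx : s (f x) = (LinearMap.ker f).mkQ x :=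
    LinearMap.congr_fun hs ((LinearMap.ker f).mkQ x)
  simp [hsx]

section Hessenberg

variable {K M : Type*} [Ring K] [AddCommGroup M] [Module K M]
  {e : ℕ → M} {D : M →ₗ[K] M} {δ : ℕ → K}

theorem span_image_Iio_le_comap_of_hessenberg
    (hD : ∀ n, D (e n) - δ n • e (n + 1) ∈ span K (e '' Set.Iic n))
    {N : ℕ} (hN : e N ∈ span K (e '' Set.Iio N)) :
    span K (e '' Set.Iio N) ≤ (span K (e '' Set.Iio N)).comap D := by
  rw [span_le]
  rintro _ ⟨i, hi, rfl⟩
  have hnext : e (i + 1) ∈ span K (e '' Set.Iio N) := by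
    rcases (Nat.succ_le_of_lt hi).eq_or_lt with rfl | hlt
    · exact hN
    · exact subset_span ⟨i + 1, hlt, rfl⟩
  have hlower := span_mono (Set.image_mono (Set.Iic_subset_Iio.2 hi)) (hD i)
  exact (sub_mem_iff_left _ (smul_mem _ _ hnext)).1 hlower

theorem span_range_le_span_image_Iio_of_hessenberg (hδ : ∀ n, IsUnit (δ n))
    (hD : ∀ n, D (e n) - δ n • e (n + 1) ∈ span K (e '' Set.Iic n))
    {N : ℕ} (hN : e N ∈ span K (e '' Set.Iio N)) :
    span K (Set.range e) ≤ span K (e '' Set.Iio N) := by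
  rw [span_le]
  rintro _ ⟨n, rfl⟩
  induction n using Nat.strong_induction_on with
  | _ n ih =>
    rcases lt_trichotomy n N with hlt | rfl | hgt
    · exact subset_span ⟨n, hlt, rfl⟩
    · exact hN
    · obtain ⟨k, rfl⟩ := Nat.exists_eq_succ_of_ne_zero (Nat.ne_zero_of_lt hgt)
      have hDk : D (e k) ∈ span K (e '' Set.Iio N) :=
        span_image_Iio_le_comap_of_hessenberg hD hN (ih k k.lt_succ_self)
      have hlower : span K (e '' Set.Iic k) ≤ span K (e '' Set.Iio N) :=
        span_le.2 (Set.image_subset_iff.2 fun i hi => ih i (Nat.lt_succ_of_le hi))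
      exact (smul_mem_iff_of_isUnit _ (hδ k)).1 ((sub_mem_iff_right _ hDk).1 (hlower (hD k)))

end Hessenberg

theorem linearIndependent_of_hessenberg {K M : Type*} [DivisionRing K] [AddCommGroup M]
    [Module K M] {e : ℕ → M} {D : M →ₗ[K] M} {δ : ℕ → K} (hδ : ∀ n, δ n ≠ 0)
    (hD : ∀ n, D (e n) - δ n • e (n + 1) ∈ span K (e '' Set.Iic n))
    (hinf : ¬ (span K (Set.range e)).FG) : LinearIndependent K e := by
  refine linearIndependent_of_notMem_span_image_Iio fun N hN => hinf ?_
  have heq : span K (Set.range e) = span K (e '' Set.Iio N) :=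
    (span_range_le_span_image_Iio_of_hessenberg (fun n => (hδ n).isUnit) hD hN).antisymm
      (span_mono (Set.image_subset_range _ _))
  exact heq ▸ fg_span ((Set.finite_Iio N).image e)

theorem fg_span_apply_of_fg_span_range {ι R V W : Type*} [CommSemiring R] [AddCommMonoid V]
    [Module R V] [Module.Finite R V] [AddCommMonoid W] [Module R W] {Γ : ι → V →ₗ[R] W}
    (h : (span R (Set.range Γ)).FG) : (span R {x : W | ∃ i v, Γ i v = x}).FG := by
  have hmap₂ := h.map₂ LinearMap.id (Module.Finite.fg_top (R := R) (M := V))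
  rw [← span_univ, map₂_span_span] at hmap₂
  convert hmap₂ using 2
  ext x
  simp

/-- The coefficient of `zⁿ` in `w F'`, where `F = ∑ F_k zᵏ` is a formal Laurent series and
`w = c z² + a z + b` is a vector field. The index runs over `ℤ` so that `F_{-1}` needs no special
treatment. -/
def vectorFieldCoeff {R M : Type*} [Ring R] [AddCommGroup M] [Module R M] (a b c : R)
    (F : ℤ → M) (n : ℤ) : M :=
  (c * (n - 1)) • F (n - 1) + (a * n) • F n + (b * (n + 1)) • F (n + 1)

theorem vectorFieldCoeff_sub_mem_span {R M : Type*} [Ring R] [AddCommGroup M] [Module R M]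
    (a b c : R) {F : ℤ → M} (hF : F (-1) = 0) (n : ℕ) :
    vectorFieldCoeff a b c F n - (b * (n + 1)) • F (n + 1 : ℕ) ∈
      span R ((fun k : ℕ => F k) '' Set.Iic n) := by
  have hprev : F (n - 1) ∈ span R ((fun k : ℕ => F k) '' Set.Iic n) := by
    cases n with
    | zero => simp [hF]
    | succ k => exact subset_span ⟨k, k.le_succ, by simp⟩
  have hself : F n ∈ span R ((fun k : ℕ => F k) '' Set.Iic n) :=
    subset_span ⟨n, Set.self_mem_Iic, rfl⟩
  simpa [vectorFieldCoeff] using add_mem (smul_mem _ _ hprev) (smul_mem _ _ hself)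

end Algebra

theorem finiteDimensional_of_dense_of_fg {𝕜 E : Type*} [NontriviallyNormedField 𝕜]
    [CompleteSpace 𝕜] [AddCommGroup E] [Module 𝕜 E] [TopologicalSpace E] [IsTopologicalAddGroup E]
    [ContinuousSMul 𝕜 E] [T2Space E] {W : Submodule 𝕜 E} (hdense : Dense (W : Set E)) (hW : W.FG) :
    FiniteDimensional 𝕜 E := by
  have : FiniteDimensional 𝕜 W := Module.Finite.iff_fg.2 hW
  have htop : W = ⊤ := W.closed_of_finiteDimensional.submodule_topologicalClosure_eq.symm.trans
    (Submodule.dense_iff_topologicalClosure_eq_top.1 hdense)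
  exact ⟨htop ▸ hW⟩

section InnerProductSpace

variable {𝕜 V H : Type*} [RCLike 𝕜] [NormedAddCommGroup H] [InnerProductSpace 𝕜 H]

/-- The assignment `z j ↦ w j` is well defined because it has the formal adjoint `u i ↦ u' i`, whose
domain is dense. -/
theorem exists_linearMap_apply_eq_of_inner_eq {ι κ E : Type*} [NormedAddCommGroup E]
    [InnerProductSpace 𝕜 E] {u : ι → H} {u' : ι → E} {z : κ → E} {w : κ → H}
    (hu : Dense (Submodule.span 𝕜 (Set.range u) : Set H))
    (h : ∀ i j, inner 𝕜 (u i) (w j) = inner 𝕜 (u' i) (z j)) :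
    ∃ X : E →ₗ[𝕜] H, ∀ j, X (z j) = w j := by
  have hker : LinearMap.ker (Finsupp.linearCombination 𝕜 z) ≤
      LinearMap.ker (Finsupp.linearCombination 𝕜 w) := by
    intro f hf
    have horth (i : ι) : inner 𝕜 (u i) (Finsupp.linearCombination 𝕜 w f) = 0 := by
      calc inner 𝕜 (u i) (Finsupp.linearCombination 𝕜 w f)
          = inner 𝕜 (u' i) (Finsupp.linearCombination 𝕜 z f) := by
            simp only [Finsupp.linearCombination_apply, Finsupp.inner_sum, inner_smul_right, h]
        _ = 0 := by rw [LinearMap.mem_ker.1 hf, inner_zero_right]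
    have hle : Submodule.span 𝕜 (Set.range u) ≤ (𝕜 ∙ Finsupp.linearCombination 𝕜 w f)ᗮ :=
      Submodule.span_le.2 (Set.range_subset_iff.2 fun i =>
        Submodule.mem_orthogonal_singleton_iff_inner_left.2 (horth i))
    exact hu.eq_zero_of_inner_right 𝕜 fun y hy =>
      Submodule.mem_orthogonal_singleton_iff_inner_left.1 (hle hy)
  obtain ⟨X, hX⟩ := exists_comp_eq_of_ker_le_ker hker
  exact ⟨X, fun j => by simpa using LinearMap.congr_fun hX (Finsupp.single j 1)⟩

/-- The vector field `c z² + a z + b` corresponds to `δ n = b (n + 1)`, `Λ' = -Λ` and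
`Λ n = c (n - 1) Γ_{n-1} + a n Γ_n + b (n + 1) Γ_{n+1}`. -/
theorem gamma_linearIndependent_of_b_ne_zero_general [AddCommGroup V] [Module 𝕜 V]
    [Module.Finite 𝕜 V] (hH : ¬ FiniteDimensional 𝕜 H) {Γ Λ : ℕ → V →ₗ[𝕜] H}
    {Λ' : ℕ → V → H} {δ : ℕ → 𝕜} (hδ : ∀ n, δ n ≠ 0)
    (hdense : Dense (Submodule.span 𝕜 {x : H | ∃ n v, Γ n v = x} : Set H))
    (hΛ : ∀ n, Λ n - δ n • Γ (n + 1) ∈ Submodule.span 𝕜 (Γ '' Set.Iic n))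
    (hadj : ∀ m n v w, inner 𝕜 (Γ m v) (Λ n w) = inner 𝕜 (Λ' m v) (Γ n w)) :
    LinearIndependent 𝕜 Γ := by
  have hrange : {x : H | ∃ n v, Γ n v = x} = Set.range fun p : ℕ × V => Γ p.1 p.2 := by
    ext; simp
  obtain ⟨X, hX⟩ := exists_linearMap_apply_eq_of_inner_eq (hrange ▸ hdense)
    fun p q : ℕ × V => hadj p.1 q.1 p.2 q.2
  have hXΓ (n : ℕ) : LinearMap.compRight 𝕜 X (Γ n) = Λ n := LinearMap.ext fun v => hX (n, v)
  exact linearIndependent_of_hessenberg hδ (fun n => (hXΓ n).symm ▸ hΛ n) fun hfg =>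
    hH (finiteDimensional_of_dense_of_fg hdense (fg_span_apply_of_fg_span_range hfg))

variable [CompleteSpace H] [NormedAddCommGroup V] [InnerProductSpace 𝕜 V] [CompleteSpace V]

theorem inner_eq_of_adjoint_comp_add_eq_zero {A B C D : V →L[𝕜] H}
    (h : (adjoint A).comp B + (adjoint C).comp D = 0) (v w : V) :
    inner 𝕜 (A v) (B w) = inner 𝕜 (-C v) (D w) := by
  have h' := congrArg (fun T : V →L[𝕜] V => inner 𝕜 v (T w)) h
  simp only [add_apply, comp_apply, inner_add_right, adjoint_inner_right, zero_apply,
    inner_zero_right] at h'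
  rw [inner_neg_left, eq_neg_of_add_eq_zero_left h']

theorem adjoint_comp_vectorFieldCoeff_add (a b c : 𝕜) (F : ℤ → V →L[𝕜] H) (m n : ℤ) :
    (adjoint (F m)).comp (vectorFieldCoeff a b c F n)
        + (adjoint (vectorFieldCoeff a b c F m)).comp (F n) =
      ((starRingEnd 𝕜) c * (m - 1)) • (adjoint (F (m - 1))).comp (F n)
        + (c * (n - 1)) • (adjoint (F m)).comp (F (n - 1))
        + (a * n + (starRingEnd 𝕜) a * m) • (adjoint (F m)).comp (F n)
        + (b * (n + 1)) • (adjoint (F m)).comp (F (n + 1))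
        + ((starRingEnd 𝕜) b * (m + 1)) • (adjoint (F (m + 1))).comp (F n) := by
  simp only [vectorFieldCoeff, map_add, map_sub, map_mul, map_one, map_intCast, map_smulₛₗ,
    comp_add, add_comp, comp_smul, smul_comp, add_smul]
  abel

end InnerProductSpace

/-- Proposition 6.2(iii): if `b ≠ 0` and the operators `Γ_n : V → H` (with `Γ_{-1} = 0`)
satisfy the two-variable difference equation
`c̄(m−1)Γ_{m−1}*Γ_n + c(n−1)Γ_m*Γ_{n−1} + (an + ām)Γ_m*Γ_n + b(n+1)Γ_m*Γ_{n+1}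
  + b̄(m+1)Γ_{m+1}*Γ_n = 0`
and the span of `{Γ_n v}` is dense in the infinite-dimensional Hilbert space `H`, then the
family `(Γ_n)` is linearly independent; in particular `Γ_n ≠ 0` for every `n`. -/
theorem gamma_linearIndependent_of_b_ne_zero
    {V : Type*} [NormedAddCommGroup V] [InnerProductSpace ℂ V]
    [FiniteDimensional ℂ V] [Nontrivial V]
    {H : Type*} [NormedAddCommGroup H] [InnerProductSpace ℂ H] [CompleteSpace H]
    (hH : ¬ FiniteDimensional ℂ H)
    (a b c : ℂ) (hb : b ≠ 0)
    (Γ : ℕ → (V →L[ℂ] H))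
    (Γ' : ℤ → (V →L[ℂ] H))
    (hΓ'nat : ∀ n : ℕ, Γ' (n : ℤ) = Γ n)
    (hΓ'neg : ∀ k : ℤ, k < 0 → Γ' k = 0)
    (hdense : Dense (↑(Submodule.span ℂ {x : H | ∃ (n : ℕ) (v : V), Γ n v = x}) : Set H))
    (hrec : ∀ m n : ℕ,
      ((starRingEnd ℂ) c * ((m : ℂ) - 1)) •
          ((ContinuousLinearMap.adjoint (Γ' ((m : ℤ) - 1))).comp (Γ' (n : ℤ)))
        + (c * ((n : ℂ) - 1)) •
          ((ContinuousLinearMap.adjoint (Γ' (m : ℤ))).comp (Γ' ((n : ℤ) - 1)))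
        + (a * (n : ℂ) + (starRingEnd ℂ) a * (m : ℂ)) •
          ((ContinuousLinearMap.adjoint (Γ' (m : ℤ))).comp (Γ' (n : ℤ)))
        + (b * ((n : ℂ) + 1)) •
          ((ContinuousLinearMap.adjoint (Γ' (m : ℤ))).comp (Γ' ((n : ℤ) + 1)))
        + ((starRingEnd ℂ) b * ((m : ℂ) + 1)) •
          ((ContinuousLinearMap.adjoint (Γ' ((m : ℤ) + 1))).comp (Γ' (n : ℤ)))
        = 0) :
    LinearIndependent ℂ Γ ∧ ∀ n : ℕ, Γ n ≠ 0 := by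
  obtain rfl : (fun n : ℕ => Γ' n) = Γ := funext hΓ'nat
  have hδ (n : ℕ) : b * (n + 1) ≠ 0 := mul_ne_zero hb (Nat.cast_add_one_ne_zero n)
  let toLinear : (V →L[ℂ] H) →ₗ[ℂ] V →ₗ[ℂ] H := coeLM ℂ
  have hlower (n : ℕ) := vectorFieldCoeff_sub_mem_span a b c
    (F := fun k => toLinear (Γ' k)) (by simp [hΓ'neg (-1)]) n
  have hskew (m n : ℕ) : (adjoint (Γ' m)).comp (vectorFieldCoeff a b c Γ' n)
      + (adjoint (vectorFieldCoeff a b c Γ' m)).comp (Γ' n) = 0 := by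
    simpa [adjoint_comp_vectorFieldCoeff_add] using hrec m n
  have hindep : LinearIndependent ℂ fun n : ℕ => Γ' n :=
    .of_comp toLinear (gamma_linearIndependent_of_b_ne_zero_general hH hδ hdense hlower
      fun m n => inner_eq_of_adjoint_comp_add_eq_zero (hskew m n))
  exact ⟨hindep, hindep.ne_zero⟩
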